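/- If a 2-connected graph G has an ear-decomposition G₀ = C₀ ⊂ G₁ ⊂ … ⊂ G_k = G in which the initial cycle C₀ has length at least 4 and every ear Pᵢ = Gᵢ \ Gᵢ₋₁ is a path of length at least 2, then G has an oriented perfect path double cover. -/

import Mathlib

/-- An oriented perfect path double cover: for each vertex `v`, a directed path
`P v` (a nonempty list of distinct vertices, consecutive ones adjacent) starting
at `v`, such that each vertex is the end of exactly one path, and each arc of the
symmetric orientation lies in exactly one path. -/
def HasOPPDC {V : Type*} (G : SimpleGraph V) : Prop :=
  ∃ P : V → List V,
    (∀ v, P v ≠ [] ∧ (P v).Nodup ∧ (P v).Chain' G.Adj ∧ (P v).head? = some v) ∧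
    (∀ w : V, ∃! v, (P v).getLast? = some w) ∧
    (∀ a b : V, G.Adj a b → ∃! v, (a, b) ∈ (P v).zip (P v).tail)

/-- The cycle graph on `ZMod n`: `v` adjacent to `v + 1`. -/
def cycleGraph (n : ℕ) : SimpleGraph (ZMod n) :=
  SimpleGraph.fromRel (fun a b => b = a + 1)

/-
Call a graph an ear graph if it arises from a four-cycle by subdividing edges and by joining new
vertices to two old ones. Cycles of length at least four, and ears of length at least two, are built
in this way, so it suffices that each of the two operations preserves the existence of an OPPDC.

Subdividing `uv` by `z`: the path through the arc `(u, v)` makes a detour through `z`, and the path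
through `(v, u)`, which is another one, is cut into a path ending and a path starting at `z`.

Joining `z` to `a` and `b`: an OPPDC has `deg a + 1 ≥ 3` paths through `a`, so one of them, say
`β a γ`, is neither the path starting nor the path ending at `b`. After reversing all paths if
necessary, `b` does not lie on `β`. Replace `β a γ` by `β a z b` and `z a γ`, and the path `δ b`
ending at `b` by `δ b z`.
-/

section Arcs

variable {V : Type*}

/-- The arcs traversed by the directed path `l`, that is, its consecutive pairs. -/
def arcs (l : List V) : Multiset (V × V) := (l.zip l.tail : List (V × V))

/-- The arcs of the symmetric orientation of a graph whose edges are listed by `F`, each of them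
once and in one of its two directions. -/
def symmArcs (F : Multiset (V × V)) : Multiset (V × V) := F + F.map Prod.swap

@[simp] theorem arcs_nil : arcs ([] : List V) = 0 := rfl

@[simp] theorem arcs_singleton (a : V) : arcs [a] = 0 := rfl

@[simp] theorem arcs_cons_cons (a b : V) (l : List V) :
    arcs (a :: b :: l) = (a, b) ::ₘ arcs (b :: l) := rfl

theorem arcs_append_cons (l m : List V) (a : V) :
    arcs (l ++ a :: m) = arcs (l ++ [a]) + arcs (a :: m) := by
  induction l with
  | nil => simp
  | cons b l ih => cases l <;> simp_all

theorem arcs_reverse (l : List V) : arcs l.reverse = (arcs l).map Prod.swap := by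
  induction l with
  | nil => rfl
  | cons a l ih =>
    cases l with
    | nil => rfl
    | cons b l =>
      simp only [List.reverse_cons, List.append_assoc, List.cons_append, List.nil_append] at ih ⊢
      rw [arcs_append_cons, ih]
      simp [add_comm _ {(b, a)}]

theorem map_snd_arcs (l : List V) : (arcs l).map Prod.snd = l.tail := by
  simp [arcs, List.map_snd_zip]

theorem mem_arcs_iff {l : List V} {u v : V} : (u, v) ∈ arcs l ↔ ∃ s t, l = s ++ u :: v :: t := by
  constructor
  · intro h
    induction l with
    | nil => simp at h
    | cons a l ih =>
      cases l with
      | nil => simp at h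
      | cons b l =>
        rw [arcs_cons_cons, Multiset.mem_cons] at h
        rcases h with h | h
        · cases h
          exact ⟨[], l, rfl⟩
        · obtain ⟨s, t, hst⟩ := ih h
          exact ⟨a :: s, t, by rw [hst, List.cons_append]⟩
  · rintro ⟨s, t, rfl⟩
    rw [arcs_append_cons]
    simp

theorem idxOf_eq_succ_of_mem_arcs [DecidableEq V] {l : List V} (hl : l.Nodup) {u v : V}
    (huv : (u, v) ∈ arcs l) : l.idxOf v = l.idxOf u + 1 := by
  obtain ⟨s, t, rfl⟩ := mem_arcs_iff.1 huv
  grind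

theorem swap_notMem_arcs {l : List V} (hl : l.Nodup) {u v : V} (huv : (u, v) ∈ arcs l) :
    (v, u) ∉ arcs l := by
  classical
  intro hvu
  have := idxOf_eq_succ_of_mem_arcs hl huv
  have := idxOf_eq_succ_of_mem_arcs hl hvu
  omega

@[simp] theorem symmArcs_cons (u v : V) (F : Multiset (V × V)) :
    symmArcs ((u, v) ::ₘ F) = (u, v) ::ₘ (v, u) ::ₘ symmArcs F := by
  simp [symmArcs, Multiset.cons_swap]

theorem mem_symmArcs {F : Multiset (V × V)} {u v : V} :
    (u, v) ∈ symmArcs F ↔ (u, v) ∈ F ∨ (v, u) ∈ F := by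
  simp [symmArcs]

theorem map_swap_symmArcs (F : Multiset (V × V)) : (symmArcs F).map Prod.swap = symmArcs F := by
  simp [symmArcs, add_comm]

theorem map_snd_symmArcs (F : Multiset (V × V)) :
    (symmArcs F).map Prod.snd = F.map Prod.fst + F.map Prod.snd := by
  simp [symmArcs, add_comm]

end Arcs

/-- The graphs obtained from a four-cycle by subdividing edges and by attaching new vertices to
pairs of old ones; `S` lists the vertices and `F` the edges, each in one of its two directions. -/
inductive EarGraph {V : Type*} : Multiset V → Multiset (V × V) → Prop
  | fourCycle {a b c d : V} (h : [a, b, c, d].Nodup) :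
      EarGraph {a, b, c, d} {(a, b), (b, c), (c, d), (d, a)}
  | subdivide {S : Multiset V} {F : Multiset (V × V)} {u v z : V}
      (h : EarGraph S ((u, v) ::ₘ F)) (hz : z ∉ S) :
      EarGraph (z ::ₘ S) ((u, z) ::ₘ (z, v) ::ₘ F)
  | attach {S : Multiset V} {F : Multiset (V × V)} {a b z : V}
      (h : EarGraph S F) (ha : a ∈ S) (hb : b ∈ S) (hab : a ≠ b) (hz : z ∉ S) :
      EarGraph (z ::ₘ S) ((a, z) ::ₘ (z, b) ::ₘ F)

/-- The directed paths `D` form an oriented perfect path double cover of the graph with vertices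
`S` and edges `F`, each edge listed in one of its two directions. -/
structure IsOPPDC {V : Type*} (S : Multiset V) (F : Multiset (V × V)) (D : Multiset (List V)) :
    Prop where
  nodup : ∀ l ∈ D, l.Nodup
  subset : ∀ l ∈ D, ∀ x ∈ l, x ∈ S
  heads : D.map List.head? = S.map some
  lasts : D.map List.getLast? = S.map some
  arcs_eq : D.bind arcs = symmArcs F

namespace EarGraph

variable {V : Type*} {S : Multiset V} {F : Multiset (V × V)}

theorem nodup_verts (h : EarGraph S F) : S.Nodup := by
  induction h with
  | fourCycle h => exact h
  | subdivide _ hz ih | attach _ _ _ _ hz ih => exact Multiset.nodup_cons.2 ⟨hz, ih⟩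

theorem mem_verts (h : EarGraph S F) : ∀ p ∈ F, p.1 ∈ S ∧ p.2 ∈ S := by
  induction h with
  | fourCycle => simp
  | subdivide _ _ ih =>
    simp only [Multiset.mem_cons, Prod.forall] at ih ⊢
    grind
  | attach _ ha hb _ _ ih =>
    simp only [Multiset.mem_cons]
    grind

theorem mem_verts_of_mem_symmArcs (h : EarGraph S F) {u v : V} (huv : (u, v) ∈ symmArcs F) :
    u ∈ S ∧ v ∈ S := by
  rcases mem_symmArcs.1 huv with huv | huv
  · exact h.mem_verts _ huv
  · exact (h.mem_verts _ huv).symm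

theorem nodup_symmArcs (h : EarGraph S F) : (symmArcs F).Nodup := by
  induction h with
  | fourCycle h =>
    simp only [symmArcs, Multiset.insert_eq_cons, Multiset.map_cons, Prod.swap_prod_mk,
      Multiset.map_singleton, Multiset.add_cons, Multiset.cons_add, Multiset.singleton_add,
      Multiset.nodup_cons, Multiset.mem_cons, Multiset.mem_singleton, Multiset.nodup_singleton,
      Prod.mk.injEq, true_and, and_true, not_or, not_and]
    grind
  | subdivide h hz ih =>
    have hS := fun u v => h.mem_verts_of_mem_symmArcs (u := u) (v := v)
    simp only [symmArcs_cons, Multiset.nodup_cons, Multiset.mem_cons] at hS ih ⊢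
    grind
  | attach h ha hb hab hz ih =>
    have hS := fun u v => h.mem_verts_of_mem_symmArcs (u := u) (v := v)
    simp only [symmArcs_cons, Multiset.nodup_cons, Multiset.mem_cons] at hS ih ⊢
    grind

theorem two_le_degree (h : EarGraph S F) : S + S ≤ F.map Prod.fst + F.map Prod.snd := by
  induction h with
  | @fourCycle a b c d =>
    refine le_of_eq ?_
    simp only [Multiset.insert_eq_cons, ← Multiset.singleton_add, Multiset.map_add,
      Multiset.map_singleton]
    abel
  | @subdivide S F u v z _ _ ih =>
    simp only [← Multiset.singleton_add, Multiset.map_add, Multiset.map_singleton] at ih ⊢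
    calc {z} + S + ({z} + S) = (S + S) + ({z} + {z}) := by abel
      _ ≤ _ + ({z} + {z}) := Multiset.add_le_add_right ih
      _ = _ := by abel
  | @attach S F a b z _ _ _ _ _ ih =>
    simp only [← Multiset.singleton_add, Multiset.map_add, Multiset.map_singleton]
    calc {z} + S + ({z} + S) = (S + S) + ({z} + {z}) := by abel
      _ ≤ F.map Prod.fst + F.map Prod.snd + ({z} + {z}) + ({a} + {b}) :=
        le_add_right (add_le_add_left ih _)
      _ = _ := by abel

/-- An ear is a vertex attached to two old ones, one of whose two edges is then subdivided
repeatedly. -/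
theorem ear (h : EarGraph S F) {a b x : V} {I : List V} (ha : a ∈ S) (hb : b ∈ S) (hab : a ≠ b)
    (hI : (x :: I).Nodup) (hdisj : ∀ y ∈ x :: I, y ∉ S) :
    EarGraph (S + ((x :: I : List V) : Multiset V)) (F + arcs (a :: x :: (I ++ [b]))) := by
  induction I generalizing x with
  | nil =>
    simpa [← Multiset.singleton_add, add_comm, add_left_comm, add_assoc]
      using h.attach ha hb hab (hdisj x (by simp))
  | cons y I ih =>
    have hyI := ih (List.nodup_cons.1 hI).2 fun z hz => hdisj z (List.mem_cons_of_mem x hz)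
    have hx : x ∉ S + ((y :: I : List V) : Multiset V) := by
      simp [hdisj x, (List.nodup_cons.1 hI).1]
    simp only [arcs_cons_cons, Multiset.add_cons] at hyI
    simpa [arcs_cons_cons, Multiset.add_cons, ← Multiset.cons_coe] using hyI.subdivide hx

theorem cycle {m : ℕ} (hm : 3 ≤ m) {f : ℕ → V} (hf : Set.InjOn f (Set.Iic m)) :
    EarGraph ((Multiset.range (m + 1)).map f)
      ((f m, f 0) ::ₘ (Multiset.range m).map fun i => (f i, f (i + 1))) := by
  induction m, hm using Nat.le_induction with
  | base =>
    have hnd : [f 3, f 0, f 1, f 2].Nodup := by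
      have : ∀ i ≤ 3, ∀ j ≤ 3, f i = f j → i = j := fun i hi j hj => hf hi hj
      grind
    have hfour := fourCycle hnd
    simpa [← Multiset.singleton_add, Multiset.range_succ, add_comm, add_left_comm, add_assoc]
      using hfour
  | succ m _ ih =>
    have hcycle := ih (hf.mono (Set.Iic_subset_Iic.2 m.le_succ))
    have hnew : f (m + 1) ∉ (Multiset.range (m + 1)).map f := by
      intro h
      obtain ⟨i, hi, hfi⟩ := Multiset.mem_map.1 h
      have hi' : i ≤ m := Nat.le_of_lt_succ (Multiset.mem_range.1 hi)
      have := hf (Set.mem_Iic.2 (by omega)) Set.self_mem_Iic hfi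
      omega
    have := hcycle.subdivide hnew
    rw [Multiset.range_succ (m + 1), Multiset.map_cons, Multiset.range_succ m,
      Multiset.map_cons (fun i => (f i, f (i + 1))), Multiset.cons_swap (f (m + 1), f 0),
      ← Multiset.range_succ]
    exact this

end EarGraph

namespace IsOPPDC

variable {V : Type*} {S : Multiset V} {F : Multiset (V × V)} {D : Multiset (List V)}

theorem fourCycle {a b c d : V} (h : [a, b, c, d].Nodup) :
    IsOPPDC {a, b, c, d} {(a, b), (b, c), (c, d), (d, a)}
      {[a, b], [b, c, d, a], [c, b, a, d], [d, c]} where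
  nodup l hl := by
    simp only [Multiset.insert_eq_cons, Multiset.mem_cons, Multiset.mem_singleton] at hl
    grind
  subset l hl x hx := by
    simp only [Multiset.insert_eq_cons, Multiset.mem_cons, Multiset.mem_singleton] at hl ⊢
    grind
  heads := by simp
  lasts := by
    simp only [Multiset.insert_eq_cons, ← Multiset.singleton_add, Multiset.map_add,
      Multiset.map_singleton, List.getLast?_cons_cons, List.getLast?_singleton]
    abel
  arcs_eq := by
    simp only [symmArcs, Multiset.insert_eq_cons, ← Multiset.singleton_add, Multiset.add_bind,
      Multiset.singleton_bind, Multiset.map_add, Multiset.map_singleton, Prod.swap_prod_mk,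
      arcs_cons_cons, arcs_singleton, Multiset.add_zero]
    abel

theorem reverse (h : IsOPPDC S F D) : IsOPPDC S F (D.map List.reverse) where
  nodup := by simpa using h.nodup
  subset := by simpa using h.subset
  heads := by simpa using h.lasts
  lasts := by simpa using h.heads
  arcs_eq := by
    rw [← map_swap_symmArcs, ← h.arcs_eq, Multiset.bind_map, Multiset.map_bind]
    simp only [arcs_reverse]

theorem exists_cons_mem (h : IsOPPDC S F D) {a : V} (ha : a ∈ S) : ∃ l, a :: l ∈ D := by
  have : some a ∈ D.map List.head? := h.heads ▸ Multiset.mem_map_of_mem _ ha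
  obtain ⟨l, hl, hhead⟩ := Multiset.mem_map.1 this
  obtain ⟨t, rfl⟩ := List.head?_eq_some_iff.1 hhead
  exact ⟨t, hl⟩

theorem exists_concat_mem (h : IsOPPDC S F D) {a : V} (ha : a ∈ S) : ∃ l, l ++ [a] ∈ D := by
  obtain ⟨l, hl⟩ := h.reverse.exists_cons_mem ha
  obtain ⟨m, hm, hml⟩ := Multiset.mem_map.1 hl
  exact ⟨l.reverse, by rwa [← List.reverse_cons, ← hml, List.reverse_reverse]⟩

theorem exists_append_mem (h : IsOPPDC S F D) {u v : V} (huv : (u, v) ∈ symmArcs F) :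
    ∃ s t, s ++ u :: v :: t ∈ D := by
  rw [← h.arcs_eq, Multiset.mem_bind] at huv
  obtain ⟨l, hl, huvl⟩ := huv
  obtain ⟨s, t, rfl⟩ := mem_arcs_iff.1 huvl
  exact ⟨s, t, hl⟩

theorem replace_for_subdivision {u v z : V} {β γ δ ε : List V} {D : Multiset (List V)}
    (h : IsOPPDC S ((u, v) ::ₘ F) ((β ++ u :: v :: γ) ::ₘ (δ ++ v :: u :: ε) ::ₘ D))
    (hz : z ∉ S) :
    IsOPPDC (z ::ₘ S) ((u, z) ::ₘ (z, v) ::ₘ F)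
      ((β ++ u :: z :: v :: γ) ::ₘ (δ ++ [v, z]) ::ₘ (z :: u :: ε) ::ₘ D) where
  nodup := by
    have hnodup := h.nodup
    have hsubset := h.subset
    simp only [Multiset.mem_cons, forall_eq_or_imp] at hnodup hsubset ⊢
    grind
  subset := by
    have hsubset := h.subset
    simp only [Multiset.mem_cons, forall_eq_or_imp] at hsubset ⊢
    grind
  heads := by
    rw [Multiset.map_cons some, ← h.heads]
    simp [List.head?_append, Multiset.cons_swap]
  lasts := by
    rw [Multiset.map_cons some, ← h.lasts]
    simp [List.getLast?_append, List.getLast?_cons, Multiset.cons_swap]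
  arcs_eq := by
    have harcs := h.arcs_eq
    simp only [Multiset.cons_bind, symmArcs_cons, arcs_append_cons β (v :: γ),
      arcs_append_cons β (z :: v :: γ), arcs_append_cons δ (u :: ε), arcs_append_cons δ [z],
      arcs_cons_cons, arcs_singleton] at harcs ⊢
    simp only [← Multiset.singleton_add] at harcs ⊢
    have hF : symmArcs F = arcs (β ++ [u]) + arcs (v :: γ) +
        (arcs (δ ++ [v]) + arcs (u :: ε)) + D.bind arcs := by
      refine add_left_cancel (a := {(u, v)} + {(v, u)}) ?_
      rw [add_assoc, ← harcs]
      abel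
    rw [hF]
    abel

theorem replace_for_attachment {a b z : V} {β γ δ : List V} {D : Multiset (List V)}
    (h : IsOPPDC S F ((β ++ a :: γ) ::ₘ (δ ++ [b]) ::ₘ D)) (hb : b ∉ β) (hab : a ≠ b)
    (hz : z ∉ S) :
    IsOPPDC (z ::ₘ S) ((a, z) ::ₘ (z, b) ::ₘ F)
      ((β ++ [a, z, b]) ::ₘ (z :: a :: γ) ::ₘ (δ ++ [b, z]) ::ₘ D) where
  nodup := by
    have hnodup := h.nodup
    have hsubset := h.subset
    simp only [Multiset.mem_cons, forall_eq_or_imp] at hnodup hsubset ⊢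
    grind
  subset := by
    have hsubset := h.subset
    simp only [Multiset.mem_cons, forall_eq_or_imp] at hsubset ⊢
    grind
  heads := by
    rw [Multiset.map_cons some, ← h.heads]
    simp [List.head?_append, Multiset.cons_swap]
  lasts := by
    rw [Multiset.map_cons some, ← h.lasts]
    simp [List.getLast?_append, List.getLast?_cons, Multiset.cons_swap]
  arcs_eq := by
    have harcs := h.arcs_eq
    rw [symmArcs_cons, symmArcs_cons, ← harcs]
    simp only [Multiset.cons_bind, arcs_append_cons β [z, b], arcs_append_cons β γ,
      arcs_append_cons δ [z], arcs_cons_cons, arcs_singleton]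
    simp only [← Multiset.singleton_add]
    abel

theorem subdivide {u v z : V} (h : IsOPPDC S ((u, v) ::ₘ F) D) (hz : z ∉ S) :
    ∃ D', IsOPPDC (z ::ₘ S) ((u, z) ::ₘ (z, v) ::ₘ F) D' := by
  obtain ⟨β, γ, hP⟩ := h.exists_append_mem (u := u) (v := v) (by simp)
  obtain ⟨δ, ε, hQ⟩ := h.exists_append_mem (u := v) (v := u) (by simp)
  have hne : δ ++ v :: u :: ε ≠ β ++ u :: v :: γ := fun hPQ =>
    swap_notMem_arcs (h.nodup _ hP) (mem_arcs_iff.2 ⟨β, γ, rfl⟩) (mem_arcs_iff.2 ⟨δ, ε, hPQ.symm⟩)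
  obtain ⟨D₁, rfl⟩ := Multiset.exists_cons_of_mem hP
  obtain ⟨D₀, rfl⟩ := Multiset.exists_cons_of_mem ((Multiset.mem_cons.1 hQ).resolve_left hne)
  exact ⟨_, h.replace_for_subdivision hz⟩

/-- A path visits its first vertex and the second end of each of its arcs, so that `deg a + 1` paths
meet the vertex `a`. -/
theorem bind_coe_eq (h : IsOPPDC S F D) :
    D.bind (fun l => (l : Multiset V)) = S + (F.map Prod.fst + F.map Prod.snd) := by
  have hheads : D.bind (fun l => (l.head?.toList : Multiset V)) = S := by
    rw [← Multiset.bind_map D (fun o => (o.toList : Multiset V)) List.head?, h.heads,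
      Multiset.bind_map]
    exact (Multiset.bind_singleton S id).trans S.map_id
  have htails : D.bind (fun l => (l.tail : Multiset V)) = F.map Prod.fst + F.map Prod.snd := by
    rw [← map_snd_symmArcs, ← h.arcs_eq, Multiset.map_bind]
    simp only [map_snd_arcs]
  rw [← htails, ← hheads, ← Multiset.bind_add]
  congr! 2 with l
  cases l <;> simp

theorem count_bind_coe [DecidableEq V] (h : ∀ l ∈ D, l.Nodup) (a : V) :
    (D.bind fun l => (l : Multiset V)).count a = (D.filter (a ∈ ·)).card := by
  induction D using Multiset.induction_on with
  | empty => simp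
  | cons l D ih =>
    simp only [Multiset.mem_cons, forall_eq_or_imp] at h
    simp only [Multiset.cons_bind, Multiset.count_add, Multiset.coe_count, h.1.count, ih h.2,
      Multiset.filter_cons, Multiset.card_add, Nat.add_right_cancel_iff]
    split_ifs <;> simp

theorem exists_mem_ne_ne (h : IsOPPDC S F D) (hS : S.Nodup)
    (hF : S + S ≤ F.map Prod.fst + F.map Prod.snd) {a : V} (ha : a ∈ S) (P Q : List V) :
    ∃ W ∈ D, a ∈ W ∧ W ≠ P ∧ W ≠ Q := by
  classical
  have hD : D.Nodup := .of_map _ (h.heads ▸ hS.map (Option.some_injective V))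
  have hcard : 3 ≤ (D.filter (a ∈ ·)).card := by
    rw [← count_bind_coe h.nodup, h.bind_coe_eq, Multiset.count_add]
    have := Multiset.count_le_of_le a hF
    rw [Multiset.count_add, Multiset.count_eq_one_of_mem hS ha] at this
    rw [Multiset.count_eq_one_of_mem hS ha]
    omega
  by_contra! hW
  have hle : D.filter (a ∈ ·) ≤ {P, Q} := by
    rw [Multiset.le_iff_subset (hD.filter _)]
    intro W hWa
    rw [Multiset.mem_filter] at hWa
    simpa [or_iff_not_imp_left] using hW W hWa.1 hWa.2
  have hcard' : _ ≤ 2 := Multiset.card_le_card hle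
  omega

theorem attach_of_notMem (h : IsOPPDC S F D) {a b z : V} {β γ δ : List V} (hW : β ++ a :: γ ∈ D)
    (hQ : δ ++ [b] ∈ D) (hQW : δ ++ [b] ≠ β ++ a :: γ) (hb : b ∉ β) (hab : a ≠ b) (hz : z ∉ S) :
    ∃ D', IsOPPDC (z ::ₘ S) ((a, z) ::ₘ (z, b) ::ₘ F) D' := by
  obtain ⟨D₁, rfl⟩ := Multiset.exists_cons_of_mem hW
  obtain ⟨D₀, rfl⟩ := Multiset.exists_cons_of_mem ((Multiset.mem_cons.1 hQ).resolve_left hQW)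
  exact ⟨_, h.replace_for_attachment hb hab hz⟩

theorem attach (h : IsOPPDC S F D) (hS : S.Nodup)
    (hF : S + S ≤ F.map Prod.fst + F.map Prod.snd) {a b z : V} (ha : a ∈ S) (hb : b ∈ S)
    (hab : a ≠ b) (hz : z ∉ S) :
    ∃ D', IsOPPDC (z ::ₘ S) ((a, z) ::ₘ (z, b) ::ₘ F) D' := by
  obtain ⟨ε, hP⟩ := h.exists_cons_mem hb
  obtain ⟨δ, hQ⟩ := h.exists_concat_mem hb
  obtain ⟨W, hW, haW, hWP, hWQ⟩ := h.exists_mem_ne_ne hS hF ha (b :: ε) (δ ++ [b])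
  obtain ⟨β, γ, rfl⟩ := List.append_of_mem haW
  by_cases hβ : b ∈ β
  · have hγ : b ∉ γ.reverse := by
      have := h.nodup _ hW
      grind
    have hW' : γ.reverse ++ a :: β.reverse ∈ D.map List.reverse :=
      Multiset.mem_map.2 ⟨_, hW, by simp⟩
    have hP' : ε.reverse ++ [b] ∈ D.map List.reverse := Multiset.mem_map.2 ⟨_, hP, by simp⟩
    have hPW : ε.reverse ++ [b] ≠ γ.reverse ++ a :: β.reverse := fun hPW =>
      hWP (by simpa using congrArg List.reverse hPW.symm)
    exact h.reverse.attach_of_notMem hW' hP' hPW hγ hab hz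
  · exact h.attach_of_notMem hW hQ hWQ.symm hβ hab hz

theorem eq_of_mem_arcs (h : IsOPPDC S F D) (hF : (symmArcs F).Nodup) {l m : List V} (hl : l ∈ D)
    (hm : m ∈ D) {p : V × V} (hpl : p ∈ arcs l) (hpm : p ∈ arcs m) : l = m := by
  by_contra hlm
  obtain ⟨D, rfl⟩ := Multiset.exists_cons_of_mem hl
  have hm : m ∈ D := (Multiset.mem_cons.1 hm).resolve_left (Ne.symm hlm)
  rw [← h.arcs_eq, Multiset.cons_bind, Multiset.nodup_add] at hF
  exact Multiset.disjoint_left.1 hF.2.2 hpl (Multiset.mem_bind.2 ⟨m, hm, hpm⟩)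

theorem eq_of_head?_eq (h : IsOPPDC S F D) (hS : S.Nodup) {l m : List V} (hl : l ∈ D) (hm : m ∈ D)
    (hlm : l.head? = m.head?) : l = m :=
  Multiset.inj_on_of_nodup_map (h.heads ▸ hS.map (Option.some_injective V)) l hl m hm hlm

theorem eq_of_getLast?_eq (h : IsOPPDC S F D) (hS : S.Nodup) {l m : List V} (hl : l ∈ D)
    (hm : m ∈ D) (hlm : l.getLast? = m.getLast?) : l = m :=
  Multiset.inj_on_of_nodup_map (h.lasts ▸ hS.map (Option.some_injective V)) l hl m hm hlm

theorem hasOPPDC {G : SimpleGraph V} (h : IsOPPDC S F D) (hS : S.Nodup) (hF : (symmArcs F).Nodup)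
    (hverts : ∀ v, v ∈ S) (hadj : ∀ u v, (u, v) ∈ symmArcs F ↔ G.Adj u v) : HasOPPDC G := by
  choose T hT using fun v => h.exists_cons_mem (hverts v)
  have hP {l : List V} (hl : l ∈ D) : ∃ v, v :: T v = l := by
    obtain ⟨v, -, hv⟩ := Multiset.mem_map.1 (h.heads ▸ Multiset.mem_map_of_mem List.head? hl)
    exact ⟨v, h.eq_of_head?_eq hS (hT v) hl hv⟩
  have hunique {Q : List V → Prop} (hex : ∃ l ∈ D, Q l)
      (hQ : ∀ l ∈ D, ∀ m ∈ D, Q l → Q m → l = m) : ∃! v, Q (v :: T v) := by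
    obtain ⟨l, hl, hQl⟩ := hex
    obtain ⟨v, rfl⟩ := hP hl
    exact ⟨v, hQl, fun w hQw => (List.cons.inj (hQ _ (hT w) _ hl hQw hQl)).1⟩
  refine ⟨fun v => v :: T v, fun v => ⟨List.cons_ne_nil _ _, h.nodup _ (hT v), ?_, rfl⟩,
    fun w => ?_, fun a b hab => ?_⟩
  · refine List.isChain_iff_forall_rel_of_append_cons_cons.2 fun a b s t hst => ?_
    rw [← hadj, ← h.arcs_eq]
    exact Multiset.mem_bind.2 ⟨_, hT v, mem_arcs_iff.2 ⟨s, t, hst⟩⟩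
  · obtain ⟨l, hl⟩ := h.exists_concat_mem (hverts w)
    exact hunique (Q := fun l => l.getLast? = some w) ⟨_, hl, List.getLast?_concat⟩
      fun l hl m hm hlw hmw => h.eq_of_getLast?_eq hS hl hm (hlw.trans hmw.symm)
  · exact hunique (Q := fun l => (a, b) ∈ arcs l)
      (Multiset.mem_bind.1 (h.arcs_eq ▸ (hadj a b).2 hab))
      fun l hl m hm hal ham => h.eq_of_mem_arcs hF hl hm hal ham

end IsOPPDC

theorem EarGraph.exists_isOPPDC {V : Type*} {S : Multiset V} {F : Multiset (V × V)}
    (h : EarGraph S F) : ∃ D, IsOPPDC S F D := by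
  induction h with
  | fourCycle h => exact ⟨_, .fourCycle h⟩
  | subdivide _ hz ih => exact ih.elim fun _ hD => hD.subdivide hz
  | attach h ha hb hab hz ih =>
    exact ih.elim fun _ hD => hD.attach h.nodup_verts h.two_le_degree ha hb hab hz

section Subgraph

variable {V : Type*} {G : SimpleGraph V} {H : G.Subgraph}

theorem mem_symmArcs_iff_adj {F : Multiset (V × V)}
    (h : H.edgeSet = {e | ∃ p ∈ F, e = s(p.1, p.2)}) {u v : V} :
    (u, v) ∈ symmArcs F ↔ H.Adj u v := by
  rw [← SimpleGraph.Subgraph.mem_edgeSet, h, mem_symmArcs]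
  simp only [Set.mem_ofPred_eq, Prod.exists, Sym2.eq_iff]
  grind

theorem cycleGraph_adj {n : ℕ} (hn : 1 < n) {x y : ZMod n} :
    (cycleGraph n).Adj x y ↔ y = x + 1 ∨ x = y + 1 := by
  have : Fact (1 < n) := ⟨hn⟩
  rw [cycleGraph, SimpleGraph.fromRel_adj, and_iff_right_iff_imp]
  rintro (rfl | rfl) <;> simp

theorem edgeSet_eq_range_of_iso_cycleGraph {n : ℕ} (hn : 1 < n) (φ : H.coe ≃g cycleGraph n) :
    H.edgeSet = Set.range fun x => s((φ.symm x).1, (φ.symm (x + 1)).1) := by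
  have hadj (x y : ZMod n) : H.Adj (φ.symm x).1 (φ.symm y).1 ↔ y = x + 1 ∨ x = y + 1 := by
    rw [← SimpleGraph.Subgraph.coe_adj, φ.symm.map_adj_iff, cycleGraph_adj hn]
  refine Set.Subset.antisymm (fun e => ?_) (Set.range_subset_iff.2 fun x => (hadj _ _).2 (.inl rfl))
  induction e with | _ u v =>
  intro huv
  obtain ⟨x, rfl⟩ : ∃ x, (φ.symm x).1 = u := ⟨φ ⟨u, H.edge_vert huv⟩, by simp⟩
  obtain ⟨y, rfl⟩ : ∃ y, (φ.symm y).1 = v := ⟨φ ⟨v, H.edge_vert huv.symm⟩, by simp⟩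
  rcases (hadj x y).1 huv with rfl | rfl
  · exact ⟨x, rfl⟩
  · exact ⟨y, Sym2.eq_swap⟩

end Subgraph

/-- The subgraph `H` is a graph as in `EarGraph`: its vertices and its edges can be listed by
multisets `S` and `F` with `EarGraph S F`. -/
def IsEarSubgraph {V : Type*} {G : SimpleGraph V} (H : G.Subgraph) : Prop :=
  ∃ S F, EarGraph S F ∧ H.verts = {v | v ∈ S} ∧ H.edgeSet = {e | ∃ p ∈ F, e = s(p.1, p.2)}

namespace IsEarSubgraph

variable {V : Type*} {G : SimpleGraph V} {H K : G.Subgraph}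

theorem hasOPPDC (h : IsEarSubgraph (⊤ : G.Subgraph)) : HasOPPDC G := by
  obtain ⟨S, F, hSF, hS, hF⟩ := h
  obtain ⟨D, hD⟩ := hSF.exists_isOPPDC
  exact hD.hasOPPDC hSF.nodup_verts hSF.nodup_symmArcs (Set.eq_univ_iff_forall.1 hS.symm)
    fun u v => mem_symmArcs_iff_adj hF

theorem ear (h : IsEarSubgraph H) {l : List V} (hl : l.Nodup) (hlen : 3 ≤ l.length)
    (hends : ∀ a b, l.head? = some a → l.getLast? = some b → a ∈ H.verts ∧ b ∈ H.verts)
    (hint : ∀ x ∈ l, x ∈ H.verts → l.head? = some x ∨ l.getLast? = some x)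
    (hverts : K.verts = H.verts ∪ {x | x ∈ l})
    (hedges : K.edgeSet = H.edgeSet ∪ {e | ∃ p ∈ l.zip l.tail, e = s(p.1, p.2)}) :
    IsEarSubgraph K := by
  obtain ⟨S, F, hSF, hS, hF⟩ := h
  obtain ⟨a, x, I, b, rfl⟩ : ∃ a x I b, l = a :: x :: (I ++ [b]) := by
    match l, hlen with
    | a :: x :: y :: l, _ =>
      exact ⟨a, x, _, _, by rw [List.dropLast_append_getLast (List.cons_ne_nil y l)]⟩
  have hlast : (a :: x :: (I ++ [b])).getLast? = some b := by simp [List.getLast?_cons]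
  obtain ⟨ha, hb⟩ := hends a b rfl hlast
  rw [hS] at ha hb hint hverts
  have hab : a ≠ b := by grind
  have hxI : (x :: I).Nodup := by grind
  have hdisj : ∀ y ∈ x :: I, y ∉ S := by
    intro y hy hyS
    have := hint y (List.mem_cons_of_mem a (List.mem_append_left [b] hy)) hyS
    grind
  refine ⟨_, _, hSF.ear ha hb hab hxI hdisj, ?_, ?_⟩
  · rw [hverts]
    ext v
    simp only [List.mem_cons, List.mem_append, List.not_mem_nil, or_false, Set.mem_union,
      Set.mem_ofPred_eq, Multiset.mem_add, Multiset.mem_coe]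
    grind
  · rw [hedges, hF, ← Set.ofPred_or]
    ext v
    simp only [Set.mem_ofPred_eq, Multiset.mem_add, or_and_right, exists_or]
    rfl

theorem of_iso_cycleGraph {n : ℕ} (hn : 4 ≤ n) (φ : H.coe ≃g cycleGraph n) : IsEarSubgraph H := by
  obtain ⟨m, rfl⟩ : ∃ m, n = m + 1 := ⟨n - 1, by omega⟩
  let f : ℕ → V := fun i => (φ.symm (i : ZMod (m + 1))).1
  have hinj : Set.InjOn f (Set.Iic m) := by
    intro i hi j hj h
    have h' := φ.symm.injective (Subtype.ext h)
    rwa [ZMod.natCast_eq_natCast_iff', Nat.mod_eq_of_lt (Nat.lt_succ_of_le hi),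
      Nat.mod_eq_of_lt (Nat.lt_succ_of_le hj)] at h'
  have hcast (x : ZMod (m + 1)) : ∃ i ∈ Multiset.range (m + 1), (i : ZMod (m + 1)) = x :=
    ⟨x.val, Multiset.mem_range.2 x.val_lt, ZMod.natCast_zmod_val x⟩
  refine ⟨_, _, .cycle (by omega) hinj, ?_, ?_⟩
  · ext v
    simp only [Set.mem_ofPred_eq, Multiset.mem_map]
    refine ⟨fun hv => ?_, fun ⟨i, _, hi⟩ => hi ▸ (φ.symm i).2⟩
    obtain ⟨i, hi, hiv⟩ := hcast (φ ⟨v, hv⟩)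
    exact ⟨i, hi, by simp [f, hiv]⟩
  · have hwrap : f 0 = f (m + 1) := by simp only [f, Nat.cast_zero, ZMod.natCast_self]
    rw [hwrap, ← Multiset.map_cons (fun i => (f i, f (i + 1))), ← Multiset.range_succ,
      edgeSet_eq_range_of_iso_cycleGraph (by omega) φ]
    ext e
    simp only [Set.mem_range, Set.mem_ofPred_eq, Multiset.mem_map, exists_exists_and_eq_and]
    constructor
    · rintro ⟨x, rfl⟩
      obtain ⟨i, hi, rfl⟩ := hcast x
      exact ⟨i, hi, by simp [f]⟩
    · rintro ⟨i, -, rfl⟩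
      exact ⟨i, by simp [f]⟩

end IsEarSubgraph

/-- if a 2-connected graph `G` has an ear-decomposition
`G₀ = C₀ ⊂ G₁ ⊂ ⋯ ⊂ G_k = G` whose initial cycle has length at least 4 and
each of whose ears is a path of length at least 2, then `G` has an OPPDC. -/
theorem ear_decomposition_hasOPPDC {V : Type*} [Fintype V] (G : SimpleGraph V)
    (h2conn : ∀ v : V, (G.induce {w : V | w ≠ v}).Connected)
    (hGconn : G.Connected)
    (k : ℕ) (Gs : Fin (k + 1) → G.Subgraph)
    (hmono : Monotone Gs)
    (hlast : Gs (Fin.last k) = ⊤)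
    -- the initial subgraph is a cycle of length at least 4
    (hC0 : ∃ n : ℕ, 4 ≤ n ∧ Nonempty ((Gs 0).coe ≃g cycleGraph n))
    -- each step adds an ear: a path of length at least 2 meeting the previous
    -- subgraph exactly in its two endpoints
    (hear : ∀ i : Fin k, ∃ l : List V,
      l.Nodup ∧ l.Chain' G.Adj ∧ 3 ≤ l.length ∧
      (∀ a b : V, l.head? = some a → l.getLast? = some b →
        a ∈ (Gs i.castSucc).verts ∧ b ∈ (Gs i.castSucc).verts) ∧
      (∀ x ∈ l, x ∈ (Gs i.castSucc).verts →
        l.head? = some x ∨ l.getLast? = some x) ∧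
      (Gs i.succ).verts = (Gs i.castSucc).verts ∪ {x | x ∈ l} ∧
      (Gs i.succ).edgeSet =
        (Gs i.castSucc).edgeSet ∪ {e | ∃ p ∈ l.zip l.tail, e = s(p.1, p.2)}) :
    HasOPPDC G := by
  have hGs : ∀ i, IsEarSubgraph (Gs i) := by
    intro i
    induction i using Fin.induction with
    | zero =>
      obtain ⟨n, hn, ⟨φ⟩⟩ := hC0
      exact .of_iso_cycleGraph hn φ
    | succ i ih =>
      obtain ⟨l, hl, -, hlen, hends, hint, hverts, hedges⟩ := hear i
      exact ih.ear hl hlen hends hint hverts hedges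
  exact (hlast ▸ hGs (Fin.last k)).hasOPPDC
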